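/- arXiv:0908.2750 — 2 statements merged into one kernel-verified Lean document; each statement's English description precedes it below -/
import Mathlib

section
/- Let n = 2k+1 be odd with n ≥ 2r+3 and suppose gcd(2r+1, 2k+1) ≠ 1. Then the minimum size of an r-identifying code in the cycle C_{2k+1} equals gcd(2r+1, 2k+1) · ⌈(2k+1) / (2·gcd(2r+1, 2k+1))⌉. -/
/-- `Dr G r D x` = `N_r[x] ∩ D`. -/
def Dr {V : Type*} (G : SimpleGraph V) (r : ℕ) (D : Set V) (x : V) : Set V :=
  {y | y ∈ D ∧ G.dist x y ≤ r}

/-- `D` is an `r`-identifying code of `G`. -/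
def IsIdCode {V : Type*} (G : SimpleGraph V) (r : ℕ) (D : Set V) : Prop :=
  (∀ x, (Dr G r D x).Nonempty) ∧ ∀ x y, x ≠ y → Dr G r D x ≠ Dr G r D y

/-- `D` is an `r`-locating-dominating set of `G`. -/
def IsLD {V : Type*} (G : SimpleGraph V) (r : ℕ) (D : Set V) : Prop :=
  (∀ x ∉ D, (Dr G r D x).Nonempty) ∧
    ∀ x ∉ D, ∀ y ∉ D, x ≠ y → Dr G r D x ≠ Dr G r D y

/-- The cycle graph on `ZMod n`. -/
def cycleG (n : ℕ) : SimpleGraph (ZMod n) :=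
  SimpleGraph.fromRel (fun x y => x - y = 1)

/-!
Write `q = 2r + 1` and `g = gcd(q, n)`. The balls of radius `r` around `y + r` and `y + r + 1`
differ only in `y` and `y + q`, so an identifying code meets every pair `{y, y + q}`. Each of the
`g` cosets of `⟨q⟩` is a cycle of length `n / g` under `+ q`, and so contains at least `⌈n / (2g)⌉`
codewords.

Conversely, a set meeting all these pairs is an identifying code as soon as it meets every run of
`g` consecutive vertices: two balls not separated by such a pair are separated by a whole run.
Taking every other element of each coset gives a set of minimal size which meets all the pairs;
starting the coset of `1` out of phase with the cosets of `0` and `2` makes it meet the runs.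
-/

open scoped Pointwise

section CycleDistance

variable {n r : ℕ}

theorem cycleG_reachable_add_one (x : ZMod n) : (cycleG n).Reachable x (x + 1) := by
  by_cases h : x = x + 1
  · exact h ▸ .rfl
  · exact SimpleGraph.Adj.reachable (by simp [cycleG, h])

theorem cycleG_dist_add_one_le (x : ZMod n) : (cycleG n).dist x (x + 1) ≤ 1 := by
  by_cases h : x = x + 1
  · simp [← h]
  · exact (SimpleGraph.dist_eq_one_iff_adj.2 (by simp [cycleG, h])).le

theorem cycleG_connected (n : ℕ) : (cycleG n).Connected where
  preconnected x z := by
    have reachable_add (t : ℤ) : (cycleG n).Reachable x (x + t) := by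
      induction t with
      | zero => simp
      | succ t ih =>
        simpa [add_assoc] using ih.trans (cycleG_reachable_add_one _)
      | pred t ih =>
        refine ih.trans (SimpleGraph.Reachable.symm ?_)
        convert cycleG_reachable_add_one _ using 1
        push_cast
        ring
    obtain ⟨t, ht⟩ := ZMod.intCast_surjective (z - x)
    simpa [ht] using reachable_add t

theorem cycleG_dist_add_natCast_le (x : ZMod n) (t : ℕ) : (cycleG n).dist x (x + t) ≤ t := by
  induction t with
  | zero => simp
  | succ t ih =>
    calc (cycleG n).dist x (x + (t + 1 : ℕ))
        ≤ (cycleG n).dist x (x + t) + (cycleG n).dist (x + t) (x + t + 1) := by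
          simpa [add_assoc] using (cycleG_connected n).dist_triangle
      _ ≤ t + 1 := add_le_add ih (cycleG_dist_add_one_le _)

theorem cycleG_dist_add_intCast_le (x : ZMod n) (t : ℤ) :
    (cycleG n).dist x (x + t) ≤ t.natAbs := by
  obtain ⟨m, rfl | rfl⟩ := t.eq_nat_or_neg
  · simpa using cycleG_dist_add_natCast_le x m
  · rw [SimpleGraph.dist_comm]
    simpa using cycleG_dist_add_natCast_le (x + ((-m : ℤ) : ZMod n)) m

theorem exists_eq_add_intCast_of_walk {x z : ZMod n} (p : (cycleG n).Walk x z) :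
    ∃ t : ℤ, t.natAbs ≤ p.length ∧ z = x + t := by
  induction p with
  | nil => exact ⟨0, by simp⟩
  | cons h p ih =>
    obtain ⟨t, ht, rfl⟩ := ih
    simp only [SimpleGraph.Walk.length_cons]
    rcases ((SimpleGraph.fromRel_adj _ _ _).1 h).2 with h | h
    · exact ⟨t - 1, by omega, by push_cast; linear_combination -h⟩
    · exact ⟨t + 1, by omega, by push_cast; linear_combination h⟩

theorem cycleG_dist_le_iff {x z : ZMod n} :
    (cycleG n).dist x z ≤ r ↔ ∃ t : ℤ, t.natAbs ≤ r ∧ z = x + t := by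
  constructor
  · intro h
    obtain ⟨p, hp⟩ := (cycleG_connected n).exists_walk_length_eq_dist x z
    obtain ⟨t, ht, hz⟩ := exists_eq_add_intCast_of_walk p
    exact ⟨t, by omega, hz⟩
  · rintro ⟨t, ht, rfl⟩
    exact (cycleG_dist_add_intCast_le x t).trans ht

theorem lt_cycleG_dist_add_intCast {t : ℤ} (hrt : r < t.natAbs) (htn : t.natAbs + r < n)
    (x : ZMod n) : r < (cycleG n).dist x (x + t) := by
  by_contra! h
  obtain ⟨u, hu, hut⟩ := cycleG_dist_le_iff.1 h
  have hdvd : (n : ℤ) ∣ t - u := by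
    rw [← ZMod.intCast_zmod_eq_zero_iff_dvd]
    simpa [sub_eq_zero] using hut
  have := Int.eq_zero_of_dvd_of_natAbs_lt_natAbs hdvd (by omega)
  omega

end CycleDistance

/-- `D` meets every pair `{y, y + q}`. With `q = 2r + 1` this says that `D` separates any two
adjacent vertices of a cycle. -/
def MeetsPairs {G : Type*} [Add G] (q : G) (D : Set G) : Prop :=
  ∀ y, y ∈ D ∨ y + q ∈ D

/-- `D` meets every run `y, y + 1, …, y + (g - 1)` of `g` consecutive elements. In a cycle,
this covers all balls and separates those pairs of balls which meeting pairs does not. -/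
def MeetsRuns {R : Type*} [AddMonoidWithOne R] (g : ℕ) (D : Set R) : Prop :=
  ∀ y, ∃ j < g, y + (j : R) ∈ D

section IdentifyingCode

variable {n r : ℕ} {D : Set (ZMod n)}

theorem IsIdCode.meetsPairs (hn : n ≠ 1) (hD : IsIdCode (cycleG n) r D) :
    MeetsPairs ((2 * r + 1 : ℕ) : ZMod n) D := by
  have := ZMod.nontrivial_iff.2 hn
  intro y
  by_contra! hy
  obtain ⟨hy₀, hy₁⟩ := hy
  refine hD.2 (y + r) (y + r + 1) (by simp) (Set.ext fun z ↦ and_congr_right fun hz ↦ ?_)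
  rw [cycleG_dist_le_iff, cycleG_dist_le_iff]
  constructor
  · rintro ⟨t, ht, rfl⟩
    have : t ≠ -r := by
      rintro rfl
      exact hy₀ (by simpa using hz)
    exact ⟨t - 1, by omega, by push_cast; ring⟩
  · rintro ⟨t, ht, rfl⟩
    have : t ≠ r := by
      rintro rfl
      refine hy₁ ?_
      convert hz using 1
      push_cast
      ring
    exact ⟨t + 1, by omega, by push_cast; ring⟩

theorem notMem_of_Dr_eq {x y : ZMod n} (h : Dr (cycleG n) r D x = Dr (cycleG n) r D y)
    {a b : ℤ} (hab : x + a = y + b) (ha : a.natAbs ≤ r) (hb : r < b.natAbs)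
    (hbn : b.natAbs + r < n) : x + (a : ZMod n) ∉ D := by
  intro hD
  have hmem : x + (a : ZMod n) ∈ Dr (cycleG n) r D y :=
    h ▸ ⟨hD, (cycleG_dist_add_intCast_le x a).trans ha⟩
  exact (lt_cycleG_dist_add_intCast hb hbn y).not_ge (hab ▸ hmem.2)

theorem MeetsPairs.Dr_ne_Dr_add_natCast (hpairs : MeetsPairs ((2 * r + 1 : ℕ) : ZMod n) D)
    {t : ℕ} (ht : 0 < t) (htr : t ≤ 2 * r + 1) (htn : t + (2 * r + 1) ≤ n) (x : ZMod n) :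
    Dr (cycleG n) r D x ≠ Dr (cycleG n) r D (x + t) := by
  -- The pair `x - r`, `x + r + 1` separates: the former lies in the ball around `x` only, the
  -- latter in the ball around `x + t` only.
  intro h
  rcases hpairs (x - r) with hD | hD
  · refine notMem_of_Dr_eq (a := -r) (b := -r - t) h
      (by push_cast; ring) (by omega) (by omega) (by omega) ?_
    simpa [sub_eq_add_neg] using hD
  · refine notMem_of_Dr_eq (a := r + 1 - t) (b := r + 1) h.symm
      (by push_cast; ring) (by omega) (by omega) (by omega) ?_
    convert hD using 1
    push_cast
    ring

theorem MeetsRuns.Dr_ne_Dr_add_natCast {g : ℕ} (hruns : MeetsRuns g D) (hgr : g ≤ 2 * r + 1)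
    (hgn : g + (2 * r + 1) ≤ n) {t : ℕ} (htr : 2 * r + 1 < t ∨ n < t + (2 * r + 1))
    (htn : 2 * t ≤ n) (x : ZMod n) :
    Dr (cycleG n) r D x ≠ Dr (cycleG n) r D (x + t) := by
  -- If the balls cover the cycle, the run starting just after the ball around `x` lies in the
  -- other ball only; if they are disjoint, take the run at the start of the ball around `x`.
  intro h
  by_cases hcover : n < t + (2 * r + 1)
  · obtain ⟨j, hj, hD⟩ := hruns (x + (r + 1))
    refine notMem_of_Dr_eq (a := r + 1 + j - t) (b := r + 1 + j) h.symm
      (by push_cast; ring) (by omega) (by omega) (by omega) ?_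
    convert hD using 1
    push_cast
    ring
  · obtain ⟨j, hj, hD⟩ := hruns (x - r)
    refine notMem_of_Dr_eq (a := j - r) (b := j - r - t) h
      (by push_cast; ring) (by omega) (by omega) (by omega) ?_
    convert hD using 1
    push_cast
    ring

theorem isIdCode_of_meetsPairs_of_meetsRuns {g : ℕ} (hgr : g ≤ 2 * r + 1)
    (hgn : g + (2 * r + 1) ≤ n) (hpairs : MeetsPairs ((2 * r + 1 : ℕ) : ZMod n) D)
    (hruns : MeetsRuns g D) : IsIdCode (cycleG n) r D := by
  have : NeZero n := ⟨by omega⟩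
  refine ⟨fun x ↦ ?_, fun x y hxy ↦ ?_⟩
  · obtain ⟨j, hj, hD⟩ := hruns (x - r)
    exact ⟨_, hD, cycleG_dist_le_iff.2 ⟨j - r, by omega, by push_cast; ring⟩⟩
  · have hne : (y - x).valMinAbs ≠ 0 := by simpa [sub_eq_zero] using hxy.symm
    have hle := (y - x).natAbs_valMinAbs_le
    have hsub := (y - x).coe_valMinAbs
    have hsep {t : ℕ} (ht : 0 < t) (htn : 2 * t ≤ n) (z : ZMod n) :
        Dr (cycleG n) r D z ≠ Dr (cycleG n) r D (z + t) := by
      by_cases htr : t ≤ 2 * r + 1 ∧ t + (2 * r + 1) ≤ n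
      · exact hpairs.Dr_ne_Dr_add_natCast ht htr.1 htr.2 z
      · exact hruns.Dr_ne_Dr_add_natCast hgr hgn (by omega) htn z
    obtain ⟨t, ht | ht⟩ := (y - x).valMinAbs.eq_nat_or_neg
    · obtain rfl : y = x + t := by
        rw [ht, Int.cast_natCast] at hsub
        linear_combination -hsub
      exact hsep (by omega) (by omega) x
    · obtain rfl : x = y + t := by
        rw [ht, Int.cast_neg, Int.cast_natCast] at hsub
        linear_combination hsub
      exact (hsep (by omega) (by omega) y).symm

end IdentifyingCode

section Cosets

open AddSubgroup

variable {G : Type*} [AddGroup G]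

theorem MeetsPairs.half_addOrderOf_le_ncard_inter [Finite G] {q : G} {D : Set G}
    (hD : MeetsPairs q D) (c : G ⧸ zmultiples q) :
    (addOrderOf q + 1) / 2 ≤ (D ∩ QuotientAddGroup.mk ⁻¹' {c}).ncard := by
  set C : Set G := QuotientAddGroup.mk ⁻¹' {c}
  have hcard : C.ncard = addOrderOf q := by
    rw [← Nat.card_coe_set_eq,
      Nat.card_congr (QuotientAddGroup.preimageMkEquivAddSubgroupProdSet _ {c}), Nat.card_prod]
    simp
  have hcover : C ⊆ D ∩ C ∪ (· - q) '' (D ∩ C) := by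
    intro y hy
    refine (hD y).imp (fun h ↦ ⟨h, hy⟩) fun h ↦ ⟨y + q, ⟨h, ?_⟩, add_sub_cancel_right y q⟩
    exact (QuotientAddGroup.mk_add_of_mem y (mem_zmultiples q)).trans hy
  have := calc addOrderOf q
      ≤ (D ∩ C ∪ (· - q) '' (D ∩ C)).ncard := hcard ▸ Set.ncard_le_ncard hcover
    _ ≤ (D ∩ C).ncard + ((· - q) '' (D ∩ C)).ncard := Set.ncard_union_le _ _
    _ ≤ (D ∩ C).ncard + (D ∩ C).ncard := Nat.add_le_add_left Set.ncard_image_le _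
  omega

theorem MeetsPairs.index_mul_le_ncard [Finite G] {q : G} {D : Set G} (hD : MeetsPairs q D) :
    (zmultiples q).index * ((addOrderOf q + 1) / 2) ≤ D.ncard := by
  classical
  have := Fintype.ofFinite G
  have := Fintype.ofFinite (G ⧸ zmultiples q)
  have hfiber (c : G ⧸ zmultiples q) :
      (addOrderOf q + 1) / 2 ≤ (D.toFinset.filter (QuotientAddGroup.mk · = c)).card := by
    rw [← Set.ncard_coe_finset]
    convert hD.half_addOrderOf_le_ncard_inter c
    ext
    simp
  have := Finset.mul_card_image_le_card_of_maps_to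
    (fun y _ ↦ Finset.mem_univ (QuotientAddGroup.mk y : G ⧸ zmultiples q)) _ fun c _ ↦ hfiber c
  rwa [Finset.card_univ, ← Nat.card_eq_fintype_card, mul_comm,
    ← Set.ncard_eq_toFinset_card'] at this

variable [DecidableEq G]

/-- The elements `0, 2q, 4q, …`, one for each even number less than the order of `q`: every other
element of `⟨q⟩`, with two neighbours at the seam if the order is odd. It is empty if `q` has
infinite order, as `addOrderOf q = 0` then. -/
noncomputable def evenMultiples (q : G) : Finset G :=
  (Finset.range ((addOrderOf q + 1) / 2)).image fun l ↦ (2 * l) • q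

theorem card_evenMultiples_le (q : G) : (evenMultiples q).card ≤ (addOrderOf q + 1) / 2 :=
  Finset.card_image_le.trans (Finset.card_range _).le

theorem nsmul_mem_evenMultiples {q : G} {j : ℕ} (hj : Even j) (hlt : j < addOrderOf q) :
    j • q ∈ evenMultiples q := by
  obtain ⟨l, rfl⟩ := hj
  exact Finset.mem_image.2 ⟨l, by rw [Finset.mem_range]; omega, by rw [two_mul]⟩

theorem mem_evenMultiples_or_sub_mem {q h : G} (hq : IsOfFinAddOrder q) (hh : h ∈ zmultiples q) :
    h ∈ evenMultiples q ∨ h - q ∈ evenMultiples q := by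
  obtain ⟨j, hj, rfl⟩ := Finset.mem_image.1 (hq.mem_zmultiples_iff_mem_range_addOrderOf.1 hh)
  rw [Finset.mem_range] at hj
  rcases j.even_or_odd with hev | ⟨l, rfl⟩
  · exact .inl (nsmul_mem_evenMultiples hev hj)
  · right
    simpa [succ_nsmul] using nsmul_mem_evenMultiples (even_two_mul l) (by omega)

theorem meetsPairs_add_evenMultiples {q : G} (hq : IsOfFinAddOrder q) {B : Finset G}
    (hB : ∀ y, ∃ b ∈ B, -b + y ∈ zmultiples q) : MeetsPairs q (B + evenMultiples q : Finset G) := by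
  intro y
  obtain ⟨b, hb, hby⟩ := hB y
  rcases mem_evenMultiples_or_sub_mem hq (add_mem hby (mem_zmultiples q)) with h | h
  · exact .inr (Finset.mem_coe.2 (by simpa [add_assoc] using Finset.add_mem_add hb h))
  · exact .inl (Finset.mem_coe.2 (by
      simpa [add_sub_assoc, add_assoc] using Finset.add_mem_add hb h))

end Cosets

section Construction

open AddSubgroup

variable {n q : ℕ}

theorem natCast_mem_zmultiples_of_gcd_dvd {c : ℕ} (h : q.gcd n ∣ c) :
    (c : ZMod n) ∈ zmultiples (q : ZMod n) := by
  obtain ⟨a, b, hab⟩ := Int.gcd_dvd_iff.1 (by simpa using h : Int.gcd q n ∣ c)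
  refine mem_zmultiples_iff.2 ⟨a, ?_⟩
  have := congrArg (Int.cast : ℤ → ZMod n) hab
  push_cast at this
  rw [this]
  simp [mul_comm]

theorem gcd_mul_addOrderOf_natCast [NeZero n] : q.gcd n * addOrderOf (q : ZMod n) = n := by
  rw [ZMod.addOrderOf_coe q (NeZero.ne n), Nat.gcd_comm, Nat.mul_div_cancel' (Nat.gcd_dvd_left n q)]

theorem index_zmultiples_natCast [NeZero n] : (zmultiples (q : ZMod n)).index = q.gcd n := by
  refine Nat.eq_of_mul_eq_mul_right (addOrderOf_pos (q : ZMod n)) ?_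
  rw [gcd_mul_addOrderOf_natCast, ← Nat.card_zmultiples, index_mul_card, Nat.card_zmod]

theorem add_two_mul_gcd_sub_one_div [NeZero n] :
    (n + (2 * q.gcd n - 1)) / (2 * q.gcd n) = (addOrderOf (q : ZMod n) + 1) / 2 := by
  have hpos : 0 < q.gcd n := Nat.gcd_pos_of_pos_right _ (NeZero.pos n)
  have hn : n = q.gcd n * addOrderOf (q : ZMod n) := gcd_mul_addOrderOf_natCast.symm
  have hsum : n + (2 * q.gcd n - 1) =
      (q.gcd n - 1) + q.gcd n * (addOrderOf (q : ZMod n) + 1) := by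
    rw [mul_add_one, ← hn]
    omega
  rw [hsum, mul_comm 2, ← Nat.div_div_eq_div_mul, Nat.add_mul_div_left _ _ hpos,
    Nat.div_eq_of_lt (by omega : q.gcd n - 1 < q.gcd n), zero_add]

/-- Representatives of the cosets of `⟨q⟩` in `ZMod n`, namely the residues `0, …, gcd(q, n) - 1`
except that `1` is replaced by `1 + q`, which puts the coset of `1` out of phase with the others. -/
def shiftedReps (n q : ℕ) : Finset (ZMod n) :=
  (Finset.range (q.gcd n)).image (Function.update Nat.cast 1 (1 + q : ZMod n))

theorem natCast_mem_shiftedReps {i : ℕ} (hi : i < q.gcd n) (hi₁ : i ≠ 1) :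
    (i : ZMod n) ∈ shiftedReps n q :=
  Finset.mem_image.2 ⟨i, Finset.mem_range.2 hi, by simp [hi₁]⟩

theorem one_add_mem_shiftedReps (h : 1 < q.gcd n) : (1 + q : ZMod n) ∈ shiftedReps n q :=
  Finset.mem_image.2 ⟨1, Finset.mem_range.2 h, by simp⟩

theorem exists_mem_shiftedReps_neg_add_mem_zmultiples [NeZero n] (y : ZMod n) :
    ∃ b ∈ shiftedReps n q, -b + y ∈ zmultiples (q : ZMod n) := by
  obtain ⟨c, rfl⟩ := ZMod.natCast_zmod_surjective y
  have hlt : c % q.gcd n < q.gcd n := Nat.mod_lt _ (Nat.gcd_pos_of_pos_right _ (NeZero.pos n))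
  have hmem : -((c % q.gcd n : ℕ) : ZMod n) + c ∈ zmultiples (q : ZMod n) := by
    have := natCast_mem_zmultiples_of_gcd_dvd (n := n) (Nat.dvd_sub_mod c : q.gcd n ∣ _)
    rwa [Nat.cast_sub (Nat.mod_le _ _), sub_eq_neg_add] at this
  by_cases h : c % q.gcd n = 1
  · refine ⟨1 + q, one_add_mem_shiftedReps (h ▸ hlt), ?_⟩
    convert sub_mem hmem (mem_zmultiples (q : ZMod n)) using 1
    rw [h]
    push_cast
    ring
  · exact ⟨_, natCast_mem_shiftedReps hlt h, hmem⟩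

/-- The code `⋃ b, (b + {0, 2q, 4q, …})`, with `b` ranging over `shiftedReps n q`: every other
element of each coset of `⟨q⟩`. This is the witness for the upper bound, with `q = 2r + 1`. -/
noncomputable def alternatingCode (n q : ℕ) : Finset (ZMod n) :=
  shiftedReps n q + evenMultiples (q : ZMod n)

theorem add_mem_alternatingCode {b e : ZMod n} (hb : b ∈ shiftedReps n q)
    (he : e ∈ evenMultiples (q : ZMod n)) : b + e ∈ alternatingCode n q :=
  Finset.add_mem_add hb he

theorem card_alternatingCode_le :
    (alternatingCode n q).card ≤ q.gcd n * ((addOrderOf (q : ZMod n) + 1) / 2) :=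
  Finset.card_add_le.trans <| Nat.mul_le_mul
    (Finset.card_image_le.trans (Finset.card_range _).le) (card_evenMultiples_le _)

theorem meetsPairs_alternatingCode [NeZero n] :
    MeetsPairs (q : ZMod n) (alternatingCode n q : Set (ZMod n)) :=
  meetsPairs_add_evenMultiples (isOfFinAddOrder_of_finite _)
    exists_mem_shiftedReps_neg_add_mem_zmultiples

theorem mem_alternatingCode_or_add_one_mem [NeZero n] (hg : 3 ≤ q.gcd n) {y : ZMod n}
    (hy : y ∈ zmultiples (q : ZMod n) ∨ y - 1 ∈ zmultiples (q : ZMod n)) :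
    y ∈ alternatingCode n q ∨ y + 1 ∈ alternatingCode n q := by
  have h₀ : (0 : ZMod n) ∈ shiftedReps n q := by
    simpa using natCast_mem_shiftedReps (i := 0) (by omega) (by omega)
  have h₁ : (1 + q : ZMod n) ∈ shiftedReps n q := one_add_mem_shiftedReps (by omega)
  have h₂ : (2 : ZMod n) ∈ shiftedReps n q := by
    simpa using natCast_mem_shiftedReps (i := 2) (by omega) (by omega)
  have hq : IsOfFinAddOrder (q : ZMod n) := isOfFinAddOrder_of_finite _
  rcases hy with hy | hy
  · refine (mem_evenMultiples_or_sub_mem hq hy).imp (fun h ↦ ?_) fun h ↦ ?_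
    · simpa using add_mem_alternatingCode h₀ h
    · convert add_mem_alternatingCode h₁ h using 1
      ring
  · refine (mem_evenMultiples_or_sub_mem hq hy).symm.imp (fun h ↦ ?_) fun h ↦ ?_
    · convert add_mem_alternatingCode h₁ h using 1
      ring
    · convert add_mem_alternatingCode h₂ h using 1
      ring

theorem exists_add_natCast_mem_zmultiples_or_sub_one_mem [NeZero n] (hg : 3 ≤ q.gcd n)
    (y : ZMod n) : ∃ j, j + 1 < q.gcd n ∧
      (y + j ∈ zmultiples (q : ZMod n) ∨ y + j - 1 ∈ zmultiples (q : ZMod n)) := by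
  obtain ⟨c, rfl⟩ := ZMod.natCast_zmod_surjective y
  have hdvd : q.gcd n ∣ c - c % q.gcd n := Nat.dvd_sub_mod c
  have hlt : c % q.gcd n < q.gcd n := Nat.mod_lt _ (by omega)
  have hle : c % q.gcd n ≤ c := Nat.mod_le _ _
  obtain h₀ | h₁ | h₂ : c % q.gcd n = 0 ∨ c % q.gcd n = 1 ∨ 2 ≤ c % q.gcd n := by omega
  · refine ⟨0, by omega, .inl ?_⟩
    simpa using natCast_mem_zmultiples_of_gcd_dvd (Nat.dvd_of_mod_eq_zero h₀)
  · refine ⟨0, by omega, .inr ?_⟩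
    rw [h₁] at hdvd
    simpa [Nat.cast_sub (h₁ ▸ hle)] using natCast_mem_zmultiples_of_gcd_dvd (n := n) hdvd
  · refine ⟨q.gcd n - c % q.gcd n, by omega, .inl ?_⟩
    have hdvd' : q.gcd n ∣ c + (q.gcd n - c % q.gcd n) := by
      rw [show c + (q.gcd n - c % q.gcd n) = c - c % q.gcd n + q.gcd n by omega]
      exact dvd_add hdvd dvd_rfl
    simpa using natCast_mem_zmultiples_of_gcd_dvd (n := n) hdvd'

theorem meetsRuns_alternatingCode [NeZero n] (hg : 3 ≤ q.gcd n) :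
    MeetsRuns (q.gcd n) (alternatingCode n q : Set (ZMod n)) := by
  intro y
  obtain ⟨j, hj, hy⟩ := exists_add_natCast_mem_zmultiples_or_sub_one_mem hg y
  rcases mem_alternatingCode_or_add_one_mem hg hy with h | h
  · exact ⟨j, by omega, h⟩
  · exact ⟨j + 1, hj, by simpa [add_assoc] using h⟩

end Construction

theorem stmt4_general (r n : ℕ) (hn : 2 * r + 3 ≤ n) (hg : Nat.gcd (2 * r + 1) n ≠ 1) :
    IsLeast {m | ∃ D : Set (ZMod n), IsIdCode (cycleG n) r D ∧ D.ncard = m}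
      (Nat.gcd (2 * r + 1) n *
        ((n + (2 * Nat.gcd (2 * r + 1) n - 1)) / (2 * Nat.gcd (2 * r + 1) n))) := by
  have : NeZero n := ⟨by omega⟩
  rw [add_two_mul_gcd_sub_one_div]
  have hlower {D : Set (ZMod n)} (hD : MeetsPairs ((2 * r + 1 : ℕ) : ZMod n) D) :=
    index_zmultiples_natCast (n := n) (q := 2 * r + 1) ▸ hD.index_mul_le_ncard
  have hdvd : Nat.gcd (2 * r + 1) n ∣ 2 * r + 1 := Nat.gcd_dvd_left _ _
  have hle : Nat.gcd (2 * r + 1) n ≤ n - (2 * r + 1) :=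
    Nat.le_of_dvd (by omega) (Nat.dvd_sub (Nat.gcd_dvd_right _ _) hdvd)
  have hg₃ : 3 ≤ Nat.gcd (2 * r + 1) n := by
    obtain ⟨a, ha⟩ := (odd_two_mul_add_one r).of_dvd_nat hdvd
    omega
  constructor
  · refine ⟨alternatingCode n (2 * r + 1), ?_, le_antisymm ?_ (hlower meetsPairs_alternatingCode)⟩
    · exact isIdCode_of_meetsPairs_of_meetsRuns (Nat.le_of_dvd (by omega) hdvd) (by omega)
        meetsPairs_alternatingCode (meetsRuns_alternatingCode hg₃)
    · exact (Set.ncard_coe_finset _).trans_le card_alternatingCode_le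
  · rintro _ ⟨D, hD, rfl⟩
    exact hlower (hD.meetsPairs (by omega))

theorem stmt4 (r k : ℕ) (hr : 1 ≤ r) (hn : 2*r+3 ≤ 2*k+1)
    (hg : Nat.gcd (2*r+1) (2*k+1) ≠ 1) :
    IsLeast {m | ∃ D : Set (ZMod (2*k+1)),
        IsIdCode (cycleG (2*k+1)) r D ∧ D.ncard = m}
      (Nat.gcd (2*r+1) (2*k+1) *
        ((2*k+1 + (2 * Nat.gcd (2*r+1) (2*k+1) - 1)) /
          (2 * Nat.gcd (2*r+1) (2*k+1)))) :=
  stmt4_general r (2 * k + 1) hn hg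
end

section
/- For n ≥ 7 with n not congruent to 3 modulo 6, the minimum size of a 2-locating-dominating set of the cycle C_n is ⌈n/3⌉. -/
/-!
Walking once around the cycle, the set `D_r(x)` can change between `x` and `x + 1` only if `x - r`
or `x + r + 1` is a codeword, hence at most `2 |D|` times, and a function on a cycle takes at most
as many values as it has changes (or is constant). Noncodewords have distinct sets `D_r(x)`, so
`n - |D| ≤ 2 |D|`.

For radius `2` the bound is attained by codes whose gaps between consecutive codewords are
alternately `4` and `2`, except near one point where a short tail absorbs `n % 6`.
-/

open Finset

lemma IsLD.nonempty {V : Type*} [Nonempty V] {G : SimpleGraph V} {r : ℕ} {D : Set V}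
    (h : IsLD G r D) : D.Nonempty := by
  obtain ⟨x⟩ := ‹Nonempty V›
  by_cases hx : x ∈ D
  · exact ⟨x, hx⟩
  · exact (h.1 x hx).mono fun _ hy => hy.1

lemma IsLD.injOn_compl {V : Type*} {G : SimpleGraph V} {r : ℕ} {D : Set V}
    (h : IsLD G r D) : Set.InjOn (Dr G r D) Dᶜ := fun x hx y hy hxy => by
  by_contra hne
  exact h.2 x hx y hy hne hxy

section Cycle

variable {n r : ℕ} {D : Set (ZMod n)} {x y : ZMod n}

lemma cycleG_adj : (cycleG n).Adj x y ↔ x ≠ y ∧ (y = x + 1 ∨ x = y + 1) := by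
  rw [cycleG, SimpleGraph.fromRel_adj, sub_eq_iff_eq_add', sub_eq_iff_eq_add', or_comm]

lemma exists_walk_cycleG_natCast_length_le (x : ZMod n) (k : ℕ) :
    ∃ p : (cycleG n).Walk x (x + k), p.length ≤ k := by
  induction k with
  | zero => exact ⟨.copy .nil rfl (by simp), by simp⟩
  | succ k ih =>
    obtain ⟨p, hp⟩ := ih
    rw [Nat.cast_add_one, ← add_assoc]
    by_cases heq : x + k = x + k + 1
    · exact ⟨p.copy rfl heq, by rw [SimpleGraph.Walk.length_copy]; omega⟩
    · exact ⟨p.concat (cycleG_adj.2 ⟨heq, .inl rfl⟩), by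
        rw [SimpleGraph.Walk.length_concat]; omega⟩

lemma exists_walk_cycleG_intCast_length_le (x : ZMod n) (i : ℤ) :
    ∃ p : (cycleG n).Walk x (x + i), p.length ≤ i.natAbs := by
  obtain ⟨k, rfl | rfl⟩ := i.eq_nat_or_neg
  · rw [Int.cast_natCast, Int.natAbs_natCast]
    exact exists_walk_cycleG_natCast_length_le x k
  · obtain ⟨p, hp⟩ := exists_walk_cycleG_natCast_length_le (x - (k : ZMod n)) k
    have hend : x - (k : ZMod n) = x + (-k : ℤ) := by push_cast; ring
    exact ⟨p.reverse.copy (sub_add_cancel ..) hend, by simpa using hp⟩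

lemma exists_intCast_of_walk (p : (cycleG n).Walk x y) :
    ∃ i ∈ Icc (-p.length : ℤ) p.length, y = x + i := by
  induction p with
  | nil => exact ⟨0, by simp, by simp⟩
  | cons hadj p ih =>
    obtain ⟨i, hi, rfl⟩ := ih
    rw [mem_Icc] at hi
    rcases (cycleG_adj.1 hadj).2 with rfl | rfl
    · refine ⟨i + 1, ?_, by push_cast; ring⟩
      rw [SimpleGraph.Walk.length_cons, mem_Icc]; omega
    · refine ⟨i - 1, ?_, by push_cast; ring⟩
      rw [SimpleGraph.Walk.length_cons, mem_Icc]; omega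

lemma cycleG_reachable (x y : ZMod n) : (cycleG n).Reachable x y := by
  obtain ⟨i, hi⟩ := ZMod.intCast_surjective (y - x)
  obtain ⟨p, -⟩ := exists_walk_cycleG_intCast_length_le x i
  exact (p.copy rfl (by rw [hi, add_sub_cancel])).reachable

lemma dist_cycleG_le_iff :
    (cycleG n).dist x y ≤ r ↔ ∃ i ∈ Icc (-r : ℤ) r, y = x + i := by
  constructor
  · intro h
    obtain ⟨p, hp⟩ := (cycleG_reachable x y).exists_walk_length_eq_dist
    obtain ⟨i, hi, hy⟩ := exists_intCast_of_walk p
    exact ⟨i, Icc_subset_Icc (by omega) (by omega) hi, hy⟩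
  · rintro ⟨i, hi, rfl⟩
    rw [mem_Icc] at hi
    obtain ⟨p, hp⟩ := exists_walk_cycleG_intCast_length_le x i
    exact (SimpleGraph.dist_le p).trans (by omega)

lemma dist_cycleG_add_intCast_le_iff (x : ZMod n) {a b : ℤ} (hab : |b - a| + r < n) :
    (cycleG n).dist (x + a) (x + b) ≤ r ↔ |b - a| ≤ r := by
  rw [dist_cycleG_le_iff]
  constructor
  · rintro ⟨i, hi, h⟩
    rw [mem_Icc] at hi
    have hdvd : (n : ℤ) ∣ b - a - i := by
      rw [← ZMod.intCast_zmod_eq_zero_iff_dvd]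
      push_cast
      linear_combination h
    have := Int.eq_zero_of_abs_lt_dvd hdvd (by grind)
    grind
  · intro h
    exact ⟨b - a, mem_Icc.2 (abs_le.1 h), by push_cast; ring⟩

lemma Dr_cycleG_eq_add_one (hleft : x - r ∉ D) (hright : x + r + 1 ∉ D) :
    Dr (cycleG n) r D x = Dr (cycleG n) r D (x + 1) := by
  ext z
  refine and_congr_right fun hz => ?_
  rw [dist_cycleG_le_iff, dist_cycleG_le_iff]
  constructor
  · rintro ⟨i, hi, rfl⟩
    rw [mem_Icc] at hi
    have hne : i ≠ -r := by
      rintro rfl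
      exact hleft (by simpa [sub_eq_add_neg] using hz)
    exact ⟨i - 1, mem_Icc.2 (by omega), by push_cast; ring⟩
  · rintro ⟨i, hi, rfl⟩
    rw [mem_Icc] at hi
    have hne : i ≠ r := by
      rintro rfl
      exact hright (by simpa [add_right_comm] using hz)
    exact ⟨i + 1, mem_Icc.2 (by omega), by push_cast; ring⟩

lemma ncard_range_le_ncard_ne_add_one [NeZero n] {α : Type*} (f : ZMod n → α) :
    (Set.range f).ncard ≤ max 1 {x | f x ≠ f (x + 1)}.ncard := by
  have hrun {x : ZMod n} (hx : f x ∉ f '' {x | f x ≠ f (x + 1)}) (y : ZMod n) : f y = f x := by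
    have hstep (k : ℕ) : f (x + k) = f x := by
      induction k with
      | zero => simp
      | succ k ih =>
        by_contra hne
        refine hx ⟨x + k, fun heq => hne ?_, ih⟩
        rw [← ih, heq]
        push_cast
        ring_nf
    simpa using hstep (y - x).val
  by_cases hsub : Set.range f ⊆ f '' {x | f x ≠ f (x + 1)}
  · exact ((Set.ncard_le_ncard hsub (Set.toFinite _)).trans
      (Set.ncard_image_le (Set.toFinite _))).trans (le_max_right ..)
  · obtain ⟨_, ⟨x, rfl⟩, hx⟩ := Set.not_subset.1 hsub
    have hsingle : Set.range f ⊆ {f x} := Set.range_subset_iff.2 (hrun hx)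
    exact ((Set.ncard_le_ncard hsingle).trans (Set.ncard_singleton _).le).trans (le_max_left ..)

theorem IsLD.le_three_mul_ncard [NeZero n] (h : IsLD (cycleG n) r D) : n ≤ 3 * D.ncard := by
  set B := {x | Dr (cycleG n) r D x ≠ Dr (cycleG n) r D (x + 1)}
  have hBsub : B ⊆ (· + (r : ZMod n)) '' D ∪ (· - ((r : ZMod n) + 1)) '' D := by
    intro x hx
    by_contra hnot
    exact hx (Dr_cycleG_eq_add_one (fun hleft => hnot (.inl ⟨_, hleft, by simp⟩))
      (fun hright => hnot (.inr ⟨_, hright, by ring⟩)))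
  have hBcard : B.ncard ≤ D.ncard + D.ncard :=
    (Set.ncard_le_ncard hBsub).trans <| (Set.ncard_union_le _ _).trans <|
      add_le_add Set.ncard_image_le Set.ncard_image_le
  have hcompl : Dᶜ.ncard ≤ max 1 B.ncard := by
    rw [← h.injOn_compl.ncard_image]
    exact (Set.ncard_le_ncard (Set.image_subset_range _ _)).trans
      (ncard_range_le_ncard_ne_add_one _)
  have hpos : 0 < D.ncard := (Set.ncard_pos).2 h.nonempty
  have htotal : D.ncard + Dᶜ.ncard = n := by
    rw [Set.ncard_add_ncard_compl, Nat.card_zmod]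
  omega

-- `4 * r < n` ensures that two balls meeting on one side of the cycle do not meet on the other.
lemma Dr_cycleG_ne_add_natCast (hn : 4 * r < n) {b j : ℕ} (hb : b ≤ 2 * r) (hj : j < b)
    (hmem : x + j - r ∈ D ∨ x + j + r + 1 ∈ D) :
    Dr (cycleG n) r D x ≠ Dr (cycleG n) r D (x + b) := by
  intro heq
  have hball {a : ℤ} (ha : x + a ∈ D) (hlo : -r ≤ a) (hhi : a ≤ b + r) :
      |a| ≤ r ↔ |a - b| ≤ r := by
    have hx := dist_cycleG_add_intCast_le_iff (r := r) x (a := 0) (b := a) (by grind)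
    have hxb := dist_cycleG_add_intCast_le_iff (r := r) x (a := b) (b := a) (by grind)
    have hiff := Set.ext_iff.1 heq (x + a)
    rw [Int.cast_zero, add_zero, sub_zero] at hx
    rw [Int.cast_natCast] at hxb
    rw [← hx, ← hxb]
    exact ⟨fun h => (hiff.1 ⟨ha, h⟩).2, fun h => (hiff.2 ⟨ha, h⟩).2⟩
  rcases hmem with hleft | hright
  · have := hball (a := j - r) (by push_cast; rwa [← add_sub_assoc]) (by omega) (by omega)
    rw [abs_le, abs_le] at this
    omega
  · have := hball (a := j + r + 1) (by push_cast; rwa [← add_assoc, ← add_assoc]) (by omega)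
      (by omega)
    rw [abs_le, abs_le] at this
    omega

/-- `D` meets every translate of the finite pattern `A`. Positions in a pattern are natural numbers;
they are reduced modulo `n` only when a translate is formed. -/
def MeetsTranslates (A : Finset ℕ) (D : Set (ZMod n)) : Prop :=
  ∀ x : ZMod n, ∃ a ∈ A, x + a ∈ D

lemma MeetsTranslates.mono {A B : Finset ℕ} (hA : MeetsTranslates A D) (hAB : A ⊆ B) :
    MeetsTranslates B D := fun x => by
  obtain ⟨a, ha, hmem⟩ := hA x
  exact ⟨a, hAB ha, hmem⟩

lemma MeetsTranslates.Dr_cycleG_nonempty (h : MeetsTranslates (range (2 * r + 1)) D)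
    (x : ZMod n) : (Dr (cycleG n) r D x).Nonempty := by
  obtain ⟨a, ha, hmem⟩ := h (x - r)
  rw [mem_range] at ha
  exact ⟨_, hmem, dist_cycleG_le_iff.2 ⟨a - r, mem_Icc.2 (by omega), by push_cast; ring⟩⟩

/-- The offsets, counted from `x - r`, of the symmetric difference of the balls of radius `r` around
`x` and `x + b`, together with the two centres. A code meeting all translates of this pattern
separates any two noncodewords that are `b` steps apart. -/
def separatingPattern (r b : ℕ) : Finset ℕ :=
  range b ∪ {r, b + r} ∪ Ico (2 * r + 1) (b + (2 * r + 1))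

lemma MeetsTranslates.Dr_cycleG_ne (hn : 4 * r < n) {b : ℕ} (hb : b ≤ 2 * r)
    (h : MeetsTranslates (separatingPattern r b) D) (hx : x ∉ D) (hxb : x + b ∉ D) :
    Dr (cycleG n) r D x ≠ Dr (cycleG n) r D (x + b) := by
  obtain ⟨a, ha, hmem⟩ := h (x - r)
  simp only [separatingPattern, mem_union, mem_range, mem_insert, mem_singleton,
    mem_Ico] at ha
  obtain (hab | rfl | rfl) | ⟨hra, hab⟩ := ha
  · exact Dr_cycleG_ne_add_natCast hn hb hab (.inl (by rwa [← sub_add_eq_add_sub]))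
  · exact absurd hmem (by rwa [sub_add_cancel])
  · exact absurd hmem (by rwa [Nat.cast_add, ← add_assoc, add_right_comm, sub_add_cancel])
  · refine Dr_cycleG_ne_add_natCast hn hb (j := a - (2 * r + 1)) (by omega) (.inr ?_)
    convert hmem using 1
    push_cast [hra]
    ring

theorem isLD_cycleG_of_meetsTranslates (hn : 4 * r < n)
    (hdom : MeetsTranslates (range (2 * r + 1)) D)
    (hsep : ∀ b ∈ Icc 1 (2 * r), MeetsTranslates (separatingPattern r b) D) :
    IsLD (cycleG n) r D := by
  refine ⟨fun x _ => hdom.Dr_cycleG_nonempty x, fun x hx y hy hxy heq => ?_⟩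
  obtain ⟨d, hdx⟩ := hdom.Dr_cycleG_nonempty x
  obtain ⟨i, hi, hdi⟩ := dist_cycleG_le_iff.1 hdx.2
  obtain ⟨j, hj, hdj⟩ := dist_cycleG_le_iff.1 (heq ▸ hdx).2
  rw [mem_Icc] at hi hj
  have hyx : y = x + (i - j : ℤ) := by push_cast; linear_combination hdi - hdj
  have hij : i - j ≠ 0 := fun h => hxy (by simpa [h] using hyx.symm)
  obtain ⟨b, hb | hb⟩ := (i - j).eq_nat_or_neg
  · obtain rfl : y = x + b := by rw [hyx, hb, Int.cast_natCast]
    exact (hsep b (mem_Icc.2 (by omega))).Dr_cycleG_ne hn (by omega) hx hy heq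
  · obtain rfl : x = y + b := by rw [hyx, hb]; simp
    exact (hsep b (mem_Icc.2 (by omega))).Dr_cycleG_ne hn (by omega) hy hx heq.symm

-- In terms of the gaps between consecutive codewords: no gap exceeds 4 (`h4`), a gap 3 is next to a
-- gap 1 (`h3`), no two gaps 4 are adjacent (`h44`), and no gap 1 lies between two gaps 4 (`h414`).
theorem isLD_two_cycleG_of_meetsTranslates (hn : 8 < n) (h4 : MeetsTranslates {0, 1, 2, 3} D)
    (h3 : MeetsTranslates {0, 2, 3, 5} D) (h44 : MeetsTranslates {0, 1, 2, 4, 5, 6} D)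
    (h414 : MeetsTranslates {0, 1, 2, 5, 6, 7} D) : IsLD (cycleG n) 2 D := by
  refine isLD_cycleG_of_meetsTranslates hn (h4.mono (by decide)) fun b hb => ?_
  obtain ⟨hb1, hb4⟩ := mem_Icc.1 hb
  interval_cases b
  · exact h3.mono (by decide)
  · exact h44.mono (by decide)
  · exact h414.mono (by decide)
  · exact h3.mono (by decide)

/-- The codewords of `cycleCode k r` beyond its `k` blocks, as offsets from `6 * k`. For
`r = 0, 1, 2, 4` they append the gaps `()`, `(1)`, `(2)`, `(1, 3)` to the gaps `(4, 2, …, 4, 2)` of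
the blocks; for `r = 5` the last gap `2` is replaced by `(3, 1, 3)`. The value at `3` is junk. -/
def cycleCodeTail : ℕ → Finset ℕ
  | 0 => ∅
  | 4 => {0, 1}
  | 5 => {1, 2}
  | _ => {0}

/-- The optimal code in the cycle of length `6 * k + r`: `k` blocks of length `6` with codewords at
offsets `0` and `4`, followed by a tail of length `r`. -/
def cycleCode (k r : ℕ) : Finset (ZMod (6 * k + r)) :=
  (range k ×ˢ {0, 4}).image (fun p => ((6 * p.1 + p.2 : ℕ) : ZMod (6 * k + r))) ∪
    (cycleCodeTail r).image (fun t => ((6 * k + t : ℕ) : ZMod (6 * k + r)))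

/-- Offsets of codewords of `cycleCode k r` from the start of its last block: those of the last
block and of the tail, and then, once around the cycle, those of the first block. For `r = 0` these
are also the offsets in any earlier block and its successor. -/
def cycleCodeSegment (r : ℕ) : Finset ℕ :=
  {0, 4} ∪ (cycleCodeTail r).image (6 + ·) ∪ {6 + r, 10 + r}

variable {k : ℕ}

lemma card_cycleCodeTail_le : ∀ r, #(cycleCodeTail r) ≤ (r + 2) / 3
  | 0 | 1 | 2 | 3 | 4 | 5 => by decide
  | r + 6 => by
    rw [cycleCodeTail, card_singleton] <;> omega

lemma card_cycleCode_le (k r : ℕ) : #(cycleCode k r) ≤ 2 * k + (r + 2) / 3 := by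
  have hblocks : #(range k ×ˢ {0, 4}) = 2 * k := by
    rw [card_product, card_range, card_pair (by decide), mul_comm]
  exact (card_union_le _ _).trans
    (add_le_add (card_image_le.trans hblocks.le) (card_image_le.trans (card_cycleCodeTail_le r)))

lemma block_mem_cycleCode {i c : ℕ} (hi : i < k) (hc : c = 0 ∨ c = 4) :
    ((6 * i + c : ℕ) : ZMod (6 * k + r)) ∈ cycleCode k r :=
  mem_union_left _ (mem_image_of_mem _ (mk_mem_product (mem_range.2 hi) (by simpa using hc)))

lemma interior_segment_mem_cycleCode {i v : ℕ} (hi : i + 1 < k) (hv : v ∈ cycleCodeSegment 0) :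
    ((6 * i + v : ℕ) : ZMod (6 * k + r)) ∈ cycleCode k r := by
  have hv : v = 0 ∨ v = 4 ∨ v = 6 ∨ v = 10 := by
    revert v
    decide
  obtain rfl | rfl | rfl | rfl := hv
  · exact block_mem_cycleCode (by omega) (.inl rfl)
  · exact block_mem_cycleCode (by omega) (.inr rfl)
  · exact block_mem_cycleCode (c := 0) hi (.inl rfl)
  · exact block_mem_cycleCode (c := 4) hi (.inr rfl)

lemma last_segment_mem_cycleCode {i v : ℕ} (hi : i + 1 = k) (hv : v ∈ cycleCodeSegment r) :
    ((6 * i + v : ℕ) : ZMod (6 * k + r)) ∈ cycleCode k r := by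
  subst hi
  have hwrap (c : ℕ) : ((6 * (i + 1) + r + c : ℕ) : ZMod (6 * (i + 1) + r)) =
      (6 * 0 + c : ℕ) := by
    rw [Nat.cast_add, ZMod.natCast_self]
    simp
  simp only [cycleCodeSegment, mem_union, mem_insert, mem_singleton, mem_image] at hv
  obtain (hc | ⟨t, ht, rfl⟩) | rfl | rfl := hv
  · exact block_mem_cycleCode (by omega) hc
  · exact mem_union_right _ (mem_image.2 ⟨t, ht, by congr 1; ring⟩)
  · rw [show 6 * i + (6 + r) = 6 * (i + 1) + r + 0 by ring, hwrap]
    exact block_mem_cycleCode (by omega) (.inl rfl)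
  · rw [show 6 * i + (10 + r) = 6 * (i + 1) + r + 4 by ring, hwrap]
    exact block_mem_cycleCode (by omega) (.inr rfl)

lemma meetsTranslates_cycleCode {A : Finset ℕ} (hk : 0 < k)
    (hinterior : ∀ s < 6, ∃ a ∈ A, s + a ∈ cycleCodeSegment 0)
    (hlast : ∀ s < 6 + r, ∃ a ∈ A, s + a ∈ cycleCodeSegment r) :
    MeetsTranslates A (cycleCode k r : Set (ZMod (6 * k + r))) := by
  intro x
  have : NeZero (6 * k + r) := ⟨by omega⟩
  have hx := x.val_lt
  suffices h : ∃ i s, x.val = 6 * i + s ∧ ∃ a ∈ A,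
      ((6 * i + (s + a) : ℕ) : ZMod (6 * k + r)) ∈ cycleCode k r by
    obtain ⟨i, s, hxis, a, ha, hmem⟩ := h
    rw [← add_assoc, ← hxis, Nat.cast_add, ZMod.natCast_zmod_val] at hmem
    exact ⟨a, ha, hmem⟩
  rcases lt_or_ge (x.val / 6 + 1) k with hi | hi
  · obtain ⟨a, ha, hmem⟩ := hinterior (x.val % 6) (by omega)
    exact ⟨x.val / 6, x.val % 6, by omega, a, ha, interior_segment_mem_cycleCode hi hmem⟩
  · obtain ⟨a, ha, hmem⟩ := hlast (x.val - 6 * (k - 1)) (by omega)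
    exact ⟨k - 1, _, by omega, a, ha, last_segment_mem_cycleCode (by omega) hmem⟩

lemma isLD_two_cycleCode_of_eight_lt (hn : 8 < 6 * k + r) (hr : r < 6) (h3 : r ≠ 3) :
    IsLD (cycleG (6 * k + r)) 2 (cycleCode k r : Set (ZMod (6 * k + r))) := by
  have hmeets {A : Finset ℕ}
      (hA : ∀ r < 6, r ≠ 3 → ∀ s < 6 + r, ∃ a ∈ A, s + a ∈ cycleCodeSegment r) :
      MeetsTranslates A (cycleCode k r : Set (ZMod (6 * k + r))) :=
    meetsTranslates_cycleCode (by omega) (hA 0 (by omega) (by omega)) (hA r hr h3)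
  exact isLD_two_cycleG_of_meetsTranslates hn (hmeets (by decide)) (hmeets (by decide))
    (hmeets (by decide)) (hmeets (by decide))

lemma isLD_cycleG_coe_iff (S : Finset (ZMod n)) :
    IsLD (cycleG n) r S ↔ (∀ x ∉ S, ∃ y ∈ S, ∃ i ∈ Icc (-r : ℤ) r, y = x + i) ∧
      ∀ x ∉ S, ∀ y ∉ S, x ≠ y → {z ∈ S | ∃ i ∈ Icc (-r : ℤ) r, z = x + i} ≠
        {z ∈ S | ∃ i ∈ Icc (-r : ℤ) r, z = y + i} := by
  have hDr (x : ZMod n) :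
      Dr (cycleG n) r S x = ({z ∈ S | ∃ i ∈ Icc (-r : ℤ) r, z = x + i} : Finset (ZMod n)) := by
    ext z
    simp only [Dr, dist_cycleG_le_iff, mem_coe, coe_filter]
  simp only [IsLD, hDr, mem_coe, coe_nonempty, filter_nonempty_iff, ne_eq, coe_inj]

theorem isLD_two_cycleCode (hn : 7 ≤ 6 * k + r) (hr : r < 6) (h3 : r ≠ 3) :
    IsLD (cycleG (6 * k + r)) 2 (cycleCode k r : Set (ZMod (6 * k + r))) := by
  rcases lt_or_ge 8 (6 * k + r) with hlarge | hsmall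
  · exact isLD_two_cycleCode_of_eight_lt hlarge hr h3
  · obtain ⟨rfl, rfl | rfl⟩ : k = 1 ∧ (r = 1 ∨ r = 2) := by omega
    all_goals
      rw [isLD_cycleG_coe_iff]
      decide

end Cycle

theorem stmt19 (n : ℕ) (hn : 7 ≤ n) (h3 : n % 6 ≠ 3) :
    IsLeast {m | ∃ D : Set (ZMod n),
        IsLD (cycleG n) 2 D ∧ D.ncard = m} ((n + 2) / 3) := by
  have : NeZero n := ⟨by omega⟩
  have hlower {D : Set (ZMod n)} (hD : IsLD (cycleG n) 2 D) : (n + 2) / 3 ≤ D.ncard := by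
    have := hD.le_three_mul_ncard
    omega
  refine ⟨?_, fun m ⟨D, hD, hm⟩ => hm ▸ hlower hD⟩
  obtain ⟨k, r, hr, rfl⟩ : ∃ k r, r < 6 ∧ n = 6 * k + r := ⟨n / 6, n % 6, by omega, by omega⟩
  have hcode := isLD_two_cycleCode hn hr (by omega)
  have hcard : (cycleCode k r : Set (ZMod (6 * k + r))).ncard ≤ (6 * k + r + 2) / 3 := by
    rw [Set.ncard_coe_finset]
    exact (card_cycleCode_le k r).trans (by omega)
  exact ⟨_, hcode, hcard.antisymm (hlower hcode)⟩
end
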